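/- arXiv:2404.18639 — 3 statements merged into one kernel-verified Lean document; each statement's English description precedes it below -/
import Mathlib

section
/- Let E be a real n×m matrix with EᵀE = I_m, and define the real symmetric (n+m)×(n+m) block matrix M̄ := [[Iₙ + E Eᵀ, E], [Eᵀ, I_m]]. Then ((M̄ − I)² − (M̄ − I))² = (M̄ − I)² − (M̄ − I), and consequently every eigenvalue of M̄ belongs to the set {(3 − √5)/2, 1, 2, (3 + √5)/2}. -/
open Matrix

/-- if `EᵀE = I` then `M̄ := [[I + EEᵀ, E], [Eᵀ, I]]` satisfies
`((M̄ − I)² − (M̄ − I))² = (M̄ − I)² − (M̄ − I)`, and every eigenvalue of `M̄` belongs to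
`{(3 − √5)/2, 1, 2, (3 + √5)/2}`. -/
theorem Mbar_eigenvalues
    (n m : ℕ) (hn : 0 < n) (hm : 0 < m) (hmn : m ≤ n)
    (E : Matrix (Fin n) (Fin m) ℝ) (hE : Eᵀ * E = 1) :
    ((fromBlocks (1 + E * Eᵀ) E Eᵀ 1 - 1) ^ 2 - (fromBlocks (1 + E * Eᵀ) E Eᵀ 1 - 1)) ^ 2
      = (fromBlocks (1 + E * Eᵀ) E Eᵀ 1 - 1) ^ 2 - (fromBlocks (1 + E * Eᵀ) E Eᵀ 1 - 1) ∧
    (∀ (μ : ℂ) (v : Fin n ⊕ Fin m → ℂ), v ≠ 0 →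
      (fromBlocks (1 + E * Eᵀ) E Eᵀ 1 : Matrix (Fin n ⊕ Fin m) (Fin n ⊕ Fin m) ℝ).map
          (Complex.ofReal) *ᵥ v = μ • v →
      μ = (((3 - Real.sqrt 5) / 2 : ℝ) : ℂ) ∨ μ = 1 ∨ μ = 2 ∨
        μ = (((3 + Real.sqrt 5) / 2 : ℝ) : ℂ)) := by
  have hA : (fromBlocks (1 + E * Eᵀ) E Eᵀ 1 - 1 : Matrix (Fin n ⊕ Fin m) (Fin n ⊕ Fin m) ℝ)
      = fromBlocks (E * Eᵀ) E Eᵀ 0 := by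
    rw [sub_eq_iff_eq_add, ← fromBlocks_one, fromBlocks_add]
    simp [add_comm]
  have hP : E * Eᵀ * E = E := by rw [Matrix.mul_assoc, hE, Matrix.mul_one]
  have hP' : Eᵀ * (E * Eᵀ) = Eᵀ := by rw [← Matrix.mul_assoc, hE, Matrix.one_mul]
  have hPP : E * Eᵀ * (E * Eᵀ) = E * Eᵀ := by rw [← Matrix.mul_assoc, hP]
  have hB : (fromBlocks (E * Eᵀ) E Eᵀ 0 : Matrix (Fin n ⊕ Fin m) (Fin n ⊕ Fin m) ℝ) ^ 2
      - fromBlocks (E * Eᵀ) E Eᵀ 0 = fromBlocks (E * Eᵀ) 0 0 1 := by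
    rw [sub_eq_iff_eq_add, pow_two, fromBlocks_multiply, fromBlocks_add, hP, hP', hPP, hE]
    simp
  have key : ((fromBlocks (1 + E * Eᵀ) E Eᵀ 1 - 1) ^ 2 - (fromBlocks (1 + E * Eᵀ) E Eᵀ 1 - 1)) ^ 2
      = (fromBlocks (1 + E * Eᵀ) E Eᵀ 1 - 1 : Matrix (Fin n ⊕ Fin m) (Fin n ⊕ Fin m) ℝ) ^ 2
        - (fromBlocks (1 + E * Eᵀ) E Eᵀ 1 - 1) := by
    rw [hA, hB, pow_two, fromBlocks_multiply, hPP]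
    simp
  refine ⟨key, ?_⟩
  intro μ v hv h
  have key2 := congrArg (Complex.ofRealHom.mapMatrix) key
  simp only [map_sub, map_pow, map_one] at key2
  have h' : (Complex.ofRealHom.mapMatrix (fromBlocks (1 + E * Eᵀ) E Eᵀ 1)) *ᵥ v = μ • v := h
  generalize Complex.ofRealHom.mapMatrix (fromBlocks (1 + E * Eᵀ) E Eᵀ 1) = M at key2 h'
  have h1 : (M - 1) *ᵥ v = (μ - 1) • v := by
    rw [sub_mulVec, h', one_mulVec, sub_smul, one_smul]
  have h2 : ((M - 1) ^ 2 - (M - 1)) *ᵥ v = ((μ - 1) ^ 2 - (μ - 1)) • v := by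
    rw [sub_mulVec, pow_two, ← mulVec_mulVec, h1, mulVec_smul, h1, smul_smul, ← sub_smul, pow_two]
  have h3 : (((M - 1) ^ 2 - (M - 1)) ^ 2) *ᵥ v = (((μ - 1) ^ 2 - (μ - 1)) ^ 2) • v := by
    rw [pow_two ((M - 1) ^ 2 - (M - 1)), ← mulVec_mulVec, h2, mulVec_smul, h2, smul_smul, ← pow_two]
  rw [key2, h2] at h3
  have h4 := smul_left_injective ℂ hv h3
  have h5 : (((Real.sqrt 5 : ℝ) : ℂ)) ^ 2 = 5 := by
    rw [← Complex.ofReal_pow, Real.sq_sqrt (by norm_num)]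
    norm_num
  push_cast
  generalize ((Real.sqrt 5 : ℝ) : ℂ) = s at h5
  have h6 : (μ - (3 - s) / 2) * ((μ - 1) * ((μ - 2) * (μ - (3 + s) / 2))) = 0 := by
    linear_combination (-1) * h4 - (μ - 1) * (μ - 2) / 4 * h5
  simpa only [mul_eq_zero, sub_eq_zero] using h6
end

section
/- Spectral equivalence is inherited by Schur complements: if 0 < α₀ ≤ β₀ and α₀ xᵀ G x ≤ xᵀ A x ≤ β₀ xᵀ G x for all x ∈ ℝⁿ, then for all y ∈ ℝᵐ, α₀ yᵀ (B A⁻¹ Bᵀ) y ≤ yᵀ (B G⁻¹ Bᵀ) y ≤ β₀ yᵀ (B A⁻¹ Bᵀ) y. -/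
open Matrix

theorem inv_form_le {n : ℕ} (P Q : Matrix (Fin n) (Fin n) ℝ) (hP : P.PosDef) (hQ : Q.PosDef)
    (c : ℝ) (hc : 0 < c)
    (h : ∀ x : Fin n → ℝ, c * (x ⬝ᵥ (P *ᵥ x)) ≤ x ⬝ᵥ (Q *ᵥ x)) (z : Fin n → ℝ) :
    c * (z ⬝ᵥ (Q⁻¹ *ᵥ z)) ≤ z ⬝ᵥ (P⁻¹ *ᵥ z) := by
  have hu : Q *ᵥ (Q⁻¹ *ᵥ z) = z := by
    rw [mulVec_mulVec, mul_nonsing_inv _ ((isUnit_iff_isUnit_det _).1 hQ.isUnit), one_mulVec]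
  have hv : P *ᵥ (P⁻¹ *ᵥ z) = z := by
    rw [mulVec_mulVec, mul_nonsing_inv _ ((isUnit_iff_isUnit_det _).1 hP.isUnit), one_mulVec]
  generalize Q⁻¹ *ᵥ z = u at *
  generalize P⁻¹ *ᵥ z = v at *
  have hPt : Pᵀ = P := by simpa using hP.isHermitian.eq
  have hsym : v ⬝ᵥ (P *ᵥ u) = z ⬝ᵥ u := by
    rw [dotProduct_mulVec, ← mulVec_transpose, hPt, hv]
  have h0 : 0 ≤ (v - c • u) ⬝ᵥ (P *ᵥ (v - c • u)) := by
    simpa using hP.posSemidef.dotProduct_mulVec_nonneg (v - c • u)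
  have h1 := h u
  rw [hu] at h1
  simp only [mulVec_sub, mulVec_smul, hv, dotProduct_sub, sub_dotProduct, smul_dotProduct,
    dotProduct_smul, smul_eq_mul, hsym] at h0
  rw [dotProduct_comm u z] at h0 h1
  rw [dotProduct_comm v z] at h0
  have h2 := mul_le_mul_of_nonneg_left h1 hc.le
  linarith

theorem schur_form_eq {n m : ℕ} (M : Matrix (Fin n) (Fin n) ℝ) (B : Matrix (Fin m) (Fin n) ℝ)
    (y : Fin m → ℝ) :
    y ⬝ᵥ ((B * M * Bᵀ) *ᵥ y) = (Bᵀ *ᵥ y) ⬝ᵥ (M *ᵥ (Bᵀ *ᵥ y)) := by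
  rw [← mulVec_mulVec, ← mulVec_mulVec, dotProduct_mulVec, ← mulVec_transpose]

/-- spectral equivalence is inherited by Schur complements: if
`α₀ xᵀ G x ≤ xᵀ A x ≤ β₀ xᵀ G x` for all `x`, then
`α₀ yᵀ (B A⁻¹ Bᵀ) y ≤ yᵀ (B G⁻¹ Bᵀ) y ≤ β₀ yᵀ (B A⁻¹ Bᵀ) y` for all `y`. -/
theorem schur_complement_spectral_equivalence
    (n m : ℕ) (hn : 0 < n) (hm : 0 < m) (hmn : m ≤ n)
    (A G : Matrix (Fin n) (Fin n) ℝ) (hA : A.PosDef) (hG : G.PosDef)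
    (B : Matrix (Fin m) (Fin n) ℝ) (hB : B.rank = m)
    (α₀ β₀ : ℝ) (hα₀ : 0 < α₀) (hαβ : α₀ ≤ β₀)
    (hlow : ∀ x : Fin n → ℝ, α₀ * (x ⬝ᵥ (G *ᵥ x)) ≤ x ⬝ᵥ (A *ᵥ x))
    (hup : ∀ x : Fin n → ℝ, x ⬝ᵥ (A *ᵥ x) ≤ β₀ * (x ⬝ᵥ (G *ᵥ x))) :
    ∀ y : Fin m → ℝ,
      α₀ * (y ⬝ᵥ ((B * A⁻¹ * Bᵀ) *ᵥ y)) ≤ y ⬝ᵥ ((B * G⁻¹ * Bᵀ) *ᵥ y) ∧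
      y ⬝ᵥ ((B * G⁻¹ * Bᵀ) *ᵥ y) ≤ β₀ * (y ⬝ᵥ ((B * A⁻¹ * Bᵀ) *ᵥ y)) := by
  intro y
  have hβ : 0 < β₀ := hα₀.trans_le hαβ
  rw [schur_form_eq, schur_form_eq]
  refine ⟨inv_form_le G A hG hA α₀ hα₀ hlow _, ?_⟩
  have := inv_form_le A G hA hG β₀⁻¹ (inv_pos.2 hβ)
    (fun x => (inv_mul_le_iff₀ hβ).2 (hup x)) (Bᵀ *ᵥ y)
  exact (inv_mul_le_iff₀ hβ).1 this
end

section
/- Let H₁ and G be real symmetric positive definite n×n matrices that are spectrally equivalent: 0 < α₀ ≤ β₀ and α₀ xᵀ G x ≤ xᵀ H₁ x ≤ β₀ xᵀ G x for all x ∈ ℝⁿ. Then: (i) G and H₁ are H₁⁻¹-norm equivalent with explicit constants, namely 1/β₀ ≤ ‖G x‖_{H₁⁻¹} / ‖H₁ x‖_{H₁⁻¹} ≤ 1/α₀ for every nonzero x ∈ ℝⁿ; and (ii) H₁ and G are H₁⁻¹-field-of-values equivalent with explicit constants, namely xᵀ H₁⁻¹ (H₁ G⁻¹) x ≥ α₀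 · xᵀ H₁⁻¹ x and ‖H₁ G⁻¹ x‖_{H₁⁻¹} ≤ β₀ · ‖x‖_{H₁⁻¹} for every x ∈ ℝⁿ. -/
open Matrix

/-- The `M`-vector norm `‖v‖_M = √(vᵀ M v)` for a (positive definite) matrix `M`. -/
noncomputable def vecNorm {k : Type*} [Fintype k] (M : Matrix k k ℝ) (v : k → ℝ) : ℝ :=
  Real.sqrt (v ⬝ᵥ (M *ᵥ v))

theorem aux_symm {n : ℕ} (M : Matrix (Fin n) (Fin n) ℝ) (hM : M.PosDef) (u v : Fin n → ℝ) :
    u ⬝ᵥ (M *ᵥ v) = v ⬝ᵥ (M *ᵥ u) := by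
  have h : Mᵀ = M := by
    have := hM.isHermitian
    rwa [Matrix.IsHermitian, Matrix.conjTranspose_eq_transpose_of_trivial] at this
  rw [Matrix.dotProduct_mulVec, ← Matrix.mulVec_transpose, h, dotProduct_comm]

theorem aux_nonneg {n : ℕ} (M : Matrix (Fin n) (Fin n) ℝ) (hM : M.PosDef) (u : Fin n → ℝ) :
    0 ≤ u ⬝ᵥ (M *ᵥ u) := by
  simpa using hM.posSemidef.dotProduct_mulVec_nonneg u

theorem aux_cs {n : ℕ} (M : Matrix (Fin n) (Fin n) ℝ) (hM : M.PosDef) (u v : Fin n → ℝ) :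
    (u ⬝ᵥ (M *ᵥ v)) ^ 2 ≤ (u ⬝ᵥ (M *ᵥ u)) * (v ⬝ᵥ (M *ᵥ v)) := by
  have h := discrim_le_zero (a := v ⬝ᵥ (M *ᵥ v)) (b := 2 * (u ⬝ᵥ (M *ᵥ v)))
    (c := u ⬝ᵥ (M *ᵥ u)) (fun t => by
      have h := aux_nonneg M hM (u + t • v)
      simp only [Matrix.mulVec_add, Matrix.mulVec_smul, dotProduct_add, add_dotProduct,
        smul_dotProduct, dotProduct_smul, smul_eq_mul] at h
      rw [aux_symm M hM v u] at h
      linarith)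
  unfold discrim at h
  nlinarith

/-- The three basic estimates, stated for `y` with `H y = G x`. -/
theorem aux_main {n : ℕ} (H G : Matrix (Fin n) (Fin n) ℝ) (hH : H.PosDef) (hG : G.PosDef)
    (α β : ℝ) (hα : 0 < α) (hαβ : α ≤ β)
    (hlow : ∀ x : Fin n → ℝ, α * (x ⬝ᵥ (G *ᵥ x)) ≤ x ⬝ᵥ (H *ᵥ x))
    (hup : ∀ x : Fin n → ℝ, x ⬝ᵥ (H *ᵥ x) ≤ β * (x ⬝ᵥ (G *ᵥ x)))
    (x y : Fin n → ℝ) (hy : H *ᵥ y = G *ᵥ x) :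
    α * (y ⬝ᵥ (H *ᵥ y)) ≤ x ⬝ᵥ (G *ᵥ x) ∧
    x ⬝ᵥ (H *ᵥ x) ≤ β ^ 2 * (y ⬝ᵥ (H *ᵥ y)) := by
  have c1 := aux_cs G hG y x
  rw [← hy] at c1
  have c2 := aux_cs H hH x y
  rw [hy, ← hy] at c2
  have a0 := aux_nonneg H hH y
  have b0 := aux_nonneg H hH x
  have g0 := aux_nonneg G hG x
  have ly := hlow y
  have ux := hup x
  rw [← hy] at ux g0 ⊢
  set a := y ⬝ᵥ (H *ᵥ y)
  set b := x ⬝ᵥ (H *ᵥ x)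
  set g := x ⬝ᵥ (H *ᵥ y)
  set q := y ⬝ᵥ (G *ᵥ y)
  constructor
  · rcases a0.eq_or_lt with h | h
    · rw [← h]; simpa using g0
    · refine le_of_mul_le_mul_right ?_ h
      have := mul_le_mul_of_nonneg_right ly g0
      have := mul_le_mul_of_nonneg_left c1 hα.le
      nlinarith
  · rcases b0.eq_or_lt with h | h
    · rw [← h]; positivity
    · refine le_of_mul_le_mul_right ?_ h
      have h1 : b ^ 2 ≤ (β * g) ^ 2 := pow_le_pow_left₀ b0 ux 2
      have := mul_le_mul_of_nonneg_left c2 (sq_nonneg β)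
      nlinarith

/-- if `H₁` and `G` are spectrally equivalent
(`α₀ xᵀ G x ≤ xᵀ H₁ x ≤ β₀ xᵀ G x`), then (i) `G` and `H₁` are `H₁⁻¹`-norm equivalent with
constants `1/β₀` and `1/α₀`, and (ii) `H₁` and `G` are `H₁⁻¹`-field-of-values equivalent
with constants `α₀` and `β₀`. -/
theorem spectral_equivalence_implies_norm_and_fov_equivalence
    (n : ℕ) (hn : 0 < n)
    (H₁ G : Matrix (Fin n) (Fin n) ℝ) (hH₁ : H₁.PosDef) (hG : G.PosDef)
    (α₀ β₀ : ℝ) (hα₀ : 0 < α₀) (hαβ : α₀ ≤ β₀)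
    (hlow : ∀ x : Fin n → ℝ, α₀ * (x ⬝ᵥ (G *ᵥ x)) ≤ x ⬝ᵥ (H₁ *ᵥ x))
    (hup : ∀ x : Fin n → ℝ, x ⬝ᵥ (H₁ *ᵥ x) ≤ β₀ * (x ⬝ᵥ (G *ᵥ x))) :
    (∀ x : Fin n → ℝ, x ≠ 0 →
      1 / β₀ ≤ vecNorm H₁⁻¹ (G *ᵥ x) / vecNorm H₁⁻¹ (H₁ *ᵥ x) ∧
      vecNorm H₁⁻¹ (G *ᵥ x) / vecNorm H₁⁻¹ (H₁ *ᵥ x) ≤ 1 / α₀) ∧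
    (∀ x : Fin n → ℝ,
      α₀ * (x ⬝ᵥ (H₁⁻¹ *ᵥ x)) ≤ x ⬝ᵥ ((H₁⁻¹ * (H₁ * G⁻¹)) *ᵥ x) ∧
      vecNorm H₁⁻¹ ((H₁ * G⁻¹) *ᵥ x) ≤ β₀ * vecNorm H₁⁻¹ x) := by
  have hβ : 0 < β₀ := lt_of_lt_of_le hα₀ hαβ
  have uH : IsUnit H₁.det := hH₁.det_pos.ne'.isUnit
  have uG : IsUnit G.det := hG.det_pos.ne'.isUnit
  have key : ∀ x, α₀ * ((G *ᵥ x) ⬝ᵥ (H₁⁻¹ *ᵥ (G *ᵥ x))) ≤ x ⬝ᵥ (G *ᵥ x) ∧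
      x ⬝ᵥ (H₁ *ᵥ x) ≤ β₀ ^ 2 * ((G *ᵥ x) ⬝ᵥ (H₁⁻¹ *ᵥ (G *ᵥ x))) := by
    intro x
    have hy : H₁ *ᵥ (H₁⁻¹ *ᵥ (G *ᵥ x)) = G *ᵥ x := by
      rw [Matrix.mulVec_mulVec, Matrix.mul_nonsing_inv _ uH, Matrix.one_mulVec]
    have := aux_main H₁ G hH₁ hG α₀ β₀ hα₀ hαβ hlow hup x _ hy
    rwa [hy, dotProduct_comm (H₁⁻¹ *ᵥ (G *ᵥ x))] at this
  have hHH : ∀ x, (H₁ *ᵥ x) ⬝ᵥ (H₁⁻¹ *ᵥ (H₁ *ᵥ x)) = x ⬝ᵥ (H₁ *ᵥ x) := by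
    intro x
    rw [Matrix.mulVec_mulVec, Matrix.nonsing_inv_mul _ uH, Matrix.one_mulVec, dotProduct_comm]
  have n1 : ∀ x, vecNorm H₁⁻¹ (H₁ *ᵥ x) ≤ β₀ * vecNorm H₁⁻¹ (G *ᵥ x) := by
    intro x
    unfold vecNorm
    rw [hHH]
    refine (Real.sqrt_le_sqrt (key x).2).trans (le_of_eq ?_)
    rw [Real.sqrt_mul (sq_nonneg _), Real.sqrt_sq hβ.le]
  have n2 : ∀ x, α₀ * vecNorm H₁⁻¹ (G *ᵥ x) ≤ vecNorm H₁⁻¹ (H₁ *ᵥ x) := by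
    intro x
    unfold vecNorm
    rw [hHH]
    refine le_trans (le_of_eq ?_) (Real.sqrt_le_sqrt
      (x := α₀ ^ 2 * ((G *ᵥ x) ⬝ᵥ (H₁⁻¹ *ᵥ (G *ᵥ x)))) ?_)
    · rw [Real.sqrt_mul (sq_nonneg _), Real.sqrt_sq hα₀.le]
    · have := mul_le_mul_of_nonneg_left (key x).1 hα₀.le
      have := hlow x
      nlinarith
  refine ⟨fun x hx => ?_, fun x => ?_⟩
  · have hpos : 0 < vecNorm H₁⁻¹ (H₁ *ᵥ x) := by
      unfold vecNorm
      rw [hHH]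
      apply Real.sqrt_pos.2
      simpa using hH₁.dotProduct_mulVec_pos hx
    constructor
    · rw [div_le_div_iff₀ hβ hpos]
      linarith [n1 x]
    · rw [div_le_div_iff₀ hpos hα₀]
      linarith [n2 x]
  · have hx : G *ᵥ (G⁻¹ *ᵥ x) = x := by
      rw [Matrix.mulVec_mulVec, Matrix.mul_nonsing_inv _ uG, Matrix.one_mulVec]
    constructor
    · have := (key (G⁻¹ *ᵥ x)).1
      rw [hx] at this
      rw [← Matrix.mul_assoc, Matrix.nonsing_inv_mul _ uH, Matrix.one_mul,
        dotProduct_comm x (G⁻¹ *ᵥ x)]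
      exact this
    · have := n1 (G⁻¹ *ᵥ x)
      rw [hx, Matrix.mulVec_mulVec] at this
      exact this
end
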